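/- arXiv:1105.1529 — 13 statements merged into one kernel-verified Lean document; each statement's English description precedes it below -/
import Mathlib

section
/- Let (V, m, τ) be a stable translation quiver which is connected, in the sense that the equivalence relation on V generated by the pairs {(y,z) : m(y,z) ≠ 0} relates any two vertices, and which has at least one arrow, i.e. m(y₀,z₀) ≠ 0 for some y₀, z₀ ∈ V. If f : V → ℤ is both additive and cluster-additive, then f(x) ≥ 0 for every x ∈ V. -/
/-- `f` is cluster-additive on the stable translation quiver with vertex set `V`,
arrow-multiplicity function `m` and translation `τ`. -/
def ClusterAdditive {V : Type*} (m : V → V → ℕ) (τ : V ≃ V) (f : V → ℤ) : Prop :=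
  ∀ z, f z + f (τ z) = ∑ᶠ y, (m y z : ℤ) * max (f y) 0

/-- `f` is additive on the stable translation quiver with vertex set `V`,
arrow-multiplicity function `m` and translation `τ`. -/
def AdditiveFn {V : Type*} (m : V → V → ℕ) (τ : V ≃ V) (f : V → ℤ) : Prop :=
  ∀ z, f z + f (τ z) = ∑ᶠ y, (m y z : ℤ) * f y

theorem stmt_0 {V : Type*} (m : V → V → ℕ) (τ : V ≃ V)
    (hfin : ∀ z, {y | m y z ≠ 0}.Finite)
    (hτ : ∀ y z, m (τ z) y = m y z)
    (hconn : ∀ x x' : V, Relation.EqvGen (fun y z => m y z ≠ 0) x x')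
    (harrow : ∃ y₀ z₀, m y₀ z₀ ≠ 0)
    (f : V → ℤ) (hadd : AdditiveFn m τ f) (hca : ClusterAdditive m τ f) :
    ∀ x, 0 ≤ f x := by
  have hout : ∀ y z, m y z ≠ 0 → ∃ w, m z w ≠ 0 := by
    intro y z h
    refine ⟨τ.symm y, ?_⟩
    have h4 := hτ z (τ.symm y)
    rw [Equiv.apply_symm_apply] at h4
    omega
  have hP : ∀ x x', Relation.EqvGen (fun y z => m y z ≠ 0) x x' →
      ((∃ w, m x w ≠ 0) ↔ (∃ w, m x' w ≠ 0)) := by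
    intro x x' h
    induction h with
    | rel a b h => exact ⟨fun _ => hout a b h, fun _ => ⟨b, h⟩⟩
    | refl a => rfl
    | symm a b _ ih => exact ih.symm
    | trans a b c _ _ ih1 ih2 => exact ih1.trans ih2
  intro x
  obtain ⟨y₀, z₀, h0⟩ := harrow
  obtain ⟨z, hz⟩ := (hP y₀ x (hconn y₀ x)).1 ⟨z₀, h0⟩
  have h := (hadd z).symm.trans (hca z)
  have hs : ∀ g : V → ℤ, (Function.support fun y => (m y z : ℤ) * g y) ⊆ (hfin z).toFinset := by
    intro g y hy
    simp only [Function.mem_support] at hy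
    simp only [Set.Finite.coe_toFinset, Set.mem_ofPred_eq]
    intro h
    simp [h] at hy
  rw [finsum_eq_sum_of_support_subset _ (hs f),
    finsum_eq_sum_of_support_subset _ (hs fun y => max (f y) 0)] at h
  have hx := (Finset.sum_eq_sum_iff_of_le (fun y _ =>
    mul_le_mul_of_nonneg_left (le_max_left (f y) 0) (Int.natCast_nonneg (m y z)))).1 h x
      (by simpa using hz)
  have hx' := mul_left_cancel₀ (by exact_mod_cast hz) hx
  rw [hx']
  exact le_max_right _ _
end

section
/- Let n ≥ 1 and let f be a cluster-additive function on ℤA_n with f(v) ≥ 0 for all vertices v. Then f is the zero function. -/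
/-- A function on the vertices of `ℤA_n` (pairs `(i,p)` with `1 ≤ p ≤ n`) is
cluster-additive if every mesh relation holds, where `t⁺ = max t 0`. -/
def ZAClusterAdditive (n : ℤ) (f : ℤ × ℤ → ℤ) : Prop :=
  ∀ i p : ℤ, 1 ≤ p → p ≤ n →
    f (i, p) + f (i - 1, p) =
      (if 2 ≤ p then max (f (i, p - 1)) 0 else 0) +
      (if p ≤ n - 1 then max (f (i - 1, p + 1)) 0 else 0)

theorem stmt_3 (n : ℤ) (hn : 1 ≤ n) (f : ℤ × ℤ → ℤ)
    (hca : ZAClusterAdditive n f)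
    (hnonneg : ∀ i p : ℤ, 1 ≤ p → p ≤ n → 0 ≤ f (i, p)) :
    ∀ i p : ℤ, 1 ≤ p → p ≤ n → f (i, p) = 0 := by
  obtain ⟨g, hg⟩ : ∃ g : ℤ → ℤ → ℤ, ∀ i p, g i p = if 1 ≤ p ∧ p ≤ n then f (i, p) else 0 :=
    ⟨_, fun _ _ => rfl⟩
  have g0 : ∀ i, g i 0 = 0 := fun i => by rw [hg]; simp
  have gn : ∀ i, g i (n + 1) = 0 := fun i => by rw [hg]; simp
  have gf : ∀ i p, 1 ≤ p → p ≤ n → g i p = f (i, p) := fun i p h1 h2 => by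
    rw [hg, if_pos ⟨h1, h2⟩]
  have gnn : ∀ i p, 0 ≤ g i p := fun i p => by
    rw [hg]; split_ifs with h
    · exact hnonneg i p h.1 h.2
    · exact le_rfl
  have mesh : ∀ i p, 1 ≤ p → p ≤ n → g (i + 1) p + g i p = g (i + 1) (p - 1) + g i (p + 1) := by
    intro i p h1 h2
    have h := hca (i + 1) p h1 h2
    rw [add_sub_cancel_right] at h
    rw [gf _ p h1 h2, gf _ p h1 h2, h]
    congr 1
    · split_ifs with h3
      · rw [← gf _ _ (by omega) (by omega)]; exact max_eq_left (gnn _ _)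
      · rw [show p - 1 = 0 by omega, g0]
    · split_ifs with h3
      · rw [← gf _ _ (by omega) (by omega)]; exact max_eq_left (gnn _ _)
      · rw [show p + 1 = n + 1 by omega, gn]
  have key : ∀ k : ℕ, (k : ℤ) ≤ n → ∀ i, g i (k + 1) = g i k + g (i + k) 1 := by
    intro k
    induction k with
    | zero => intro _ i; simp [g0]
    | succ k ih =>
      intro hk i
      push_cast at hk ⊢
      have h1 := ih (by omega) (i + 1)
      have h2 := mesh i (k + 1) (by omega) hk
      rw [add_sub_cancel_right] at h2
      rw [show i + ((k : ℤ) + 1) = i + 1 + k by ring]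
      linarith
  have a0 : ∀ i, g i 1 = 0 := by
    intro i
    have h := key n.toNat (by omega) (i - n)
    rw [Int.toNat_of_nonneg (by omega), gn, sub_add_cancel] at h
    have := gnn (i - n) n
    have := gnn i 1
    omega
  have all0 : ∀ k : ℕ, (k : ℤ) ≤ n → ∀ i, g i k = 0 := by
    intro k
    induction k with
    | zero => intro _ i; simp [g0]
    | succ k ih =>
      intro hk i
      push_cast at hk ⊢
      rw [key k (by omega), ih (by omega), a0, add_zero]
  intro i p h1 h2
  have h := all0 p.toNat (by omega) i
  rw [Int.toNat_of_nonneg (by omega)] at h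
  rw [← gf i p h1 h2, h]
end

section
/- Let n ≥ 1 and let f : {1,…,n} → ℤ satisfy 2·f(p) = f(p−1)⁺ + f(p+1)⁺ for all 1 ≤ p ≤ n, where the terms f(0)⁺ and f(n+1)⁺ are interpreted as 0. Then f is identically zero. (This says that the only cluster-additive function on the translation quiver ℤA_n/τ is the zero function.) -/
theorem stmt_4 (n : ℤ) (hn : 1 ≤ n) (f : ℤ → ℤ)
    (hca : ∀ p : ℤ, 1 ≤ p → p ≤ n →
      2 * f p = (if 2 ≤ p then max (f (p - 1)) 0 else 0) +
                (if p ≤ n - 1 then max (f (p + 1)) 0 else 0)) :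
    ∀ p : ℤ, 1 ≤ p → p ≤ n → f p = 0 := by
  have hnn : ∀ p : ℤ, 1 ≤ p → p ≤ n → 0 ≤ f p := by
    intro p h1 h2
    have h := hca p h1 h2
    split_ifs at h <;> omega
  obtain ⟨g, hg⟩ : ∃ g : ℤ → ℤ, ∀ p, g p = if 1 ≤ p ∧ p ≤ n then f p else 0 :=
    ⟨_, fun _ => rfl⟩
  have hin : ∀ p : ℤ, 1 ≤ p → p ≤ n → g p = f p := fun p h1 h2 => by
    rw [hg, if_pos ⟨h1, h2⟩]
  have hout : ∀ p : ℤ, ¬ (1 ≤ p ∧ p ≤ n) → g p = 0 := fun p h => by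
    rw [hg, if_neg h]
  have hlin : ∀ p : ℤ, 1 ≤ p → p ≤ n → 2 * g p = g (p - 1) + g (p + 1) := by
    intro p h1 h2
    have h := hca p h1 h2
    rw [hin p h1 h2, h]
    congr 1
    · split_ifs with c
      · rw [hin _ (by omega) (by omega), max_eq_left (hnn _ (by omega) (by omega))]
      · rw [hout _ (by omega)]
    · split_ifs with c
      · rw [hin _ (by omega) (by omega), max_eq_left (hnn _ (by omega) (by omega))]
      · rw [hout _ (by omega)]
  have key : ∀ k : ℕ, (k : ℤ) ≤ n → g k = k * g 1 ∧ g (k + 1) = (k + 1) * g 1 := by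
    intro k
    induction k with
    | zero =>
      intro _
      have := hout 0 (by omega)
      simp [this]
    | succ k ih =>
      intro hk
      push_cast at hk ⊢
      obtain ⟨a, b⟩ := ih (by omega)
      refine ⟨b, ?_⟩
      have h := hlin (k + 1) (by omega) hk
      rw [add_sub_cancel_right] at h
      linarith
  have h1 : g 1 = 0 := by
    have h := (key n.toNat (by omega)).2
    rw [Int.toNat_of_nonneg (by omega), hout (n + 1) (by omega)] at h
    rcases mul_eq_zero.mp h.symm with h | h
    · omega
    · exact h
  intro p hp1 hp2
  have h := (key p.toNat (by omega)).1
  rw [Int.toNat_of_nonneg (by omega), h1, mul_zero, hin p hp1 hp2] at h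
  exact h
end

section
/- Let (V, m, τ) be a stable translation quiver in which every vertex is the source of at least one arrow (for every y ∈ V there exists z ∈ V with m(y,z) ≠ 0). Let f₁, …, f_a : V → ℤ (a ≥ 1) be cluster-additive functions. Then the pointwise sum f₁ + ⋯ + f_a is cluster-additive if and only if the functions f₁, …, f_a are pairwise compatible. -/
/-- Two functions are compatible if their product is pointwise non-negative. -/
def Compatible {V : Type*} (f g : V → ℤ) : Prop := ∀ x, 0 ≤ f x * g x

theorem max_sum_le {a : ℕ} (g : Fin a → ℤ) : max (∑ i, g i) 0 ≤ ∑ i, max (g i) 0 :=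
  max_le (Finset.sum_le_sum fun i _ => le_max_left _ _)
    (Finset.sum_nonneg fun i _ => le_max_right _ _)

theorem max_sum_eq_iff {a : ℕ} (g : Fin a → ℤ) :
    max (∑ i, g i) 0 = ∑ i, max (g i) 0 ↔ ∀ i j, i ≠ j → 0 ≤ g i * g j := by
  constructor
  · intro h
    have key : ∀ i j, 0 < g i → g j < 0 → False := by
      intro i j hi hj
      have h1 : ∑ k, g k < ∑ k, max (g k) 0 :=
        Finset.sum_lt_sum (fun k _ => le_max_left _ _)
          ⟨j, Finset.mem_univ _, by rw [max_eq_right hj.le]; exact hj⟩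
      have h2 : 0 < ∑ k, max (g k) 0 :=
        Finset.sum_pos' (fun k _ => le_max_right _ _)
          ⟨i, Finset.mem_univ _, lt_max_of_lt_left hi⟩
      have := max_lt h1 h2
      omega
    intro i j _
    by_contra! hneg
    rcases mul_neg_iff.mp hneg with ⟨h1, h2⟩ | ⟨h1, h2⟩
    · exact key i j h1 h2
    · exact key j i h2 h1
  · intro h
    by_cases hp : ∃ i, 0 < g i
    · obtain ⟨i, hi⟩ := hp
      have hn : ∀ j, 0 ≤ g j := by
        intro j
        by_cases hij : i = j
        · subst hij; exact hi.le
        · exact nonneg_of_mul_nonneg_right (h i j hij) hi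
      rw [max_eq_left (Finset.sum_nonneg fun j _ => hn j)]
      exact Finset.sum_congr rfl fun j _ => (max_eq_left (hn j)).symm
    · push Not at hp
      rw [max_eq_right (Finset.sum_nonpos fun j _ => hp j)]
      exact (Finset.sum_eq_zero fun j _ => max_eq_right (hp j)).symm

theorem stmt_5 {V : Type*} (m : V → V → ℕ) (τ : V ≃ V)
    (hfin : ∀ z, {y | m y z ≠ 0}.Finite)
    (hτ : ∀ y z, m (τ z) y = m y z)
    (hsource : ∀ y : V, ∃ z : V, m y z ≠ 0)
    (a : ℕ) (ha : 1 ≤ a) (f : Fin a → V → ℤ)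
    (hca : ∀ i, ClusterAdditive m τ (f i)) :
    ClusterAdditive m τ (fun x => ∑ i, f i x) ↔
      ∀ i j, i ≠ j → Compatible (f i) (f j) := by
  have hsum : ∀ (z : V) (g : V → ℤ), ∑ᶠ y, (m y z : ℤ) * g y
      = ∑ y ∈ (hfin z).toFinset, (m y z : ℤ) * g y := by
    intro z g
    apply finsum_eq_sum_of_support_subset
    intro y hy
    simp only [Set.Finite.coe_toFinset, Set.mem_ofPred_eq]
    intro h0
    apply hy
    simp [h0]
  have hL : ∀ z, (∑ i, f i z) + ∑ i, f i (τ z)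
      = ∑ y ∈ (hfin z).toFinset, (m y z : ℤ) * ∑ i, max (f i y) 0 := by
    intro z
    rw [← Finset.sum_add_distrib]
    simp_rw [Finset.mul_sum]
    rw [Finset.sum_comm]
    refine Finset.sum_congr rfl fun i _ => ?_
    rw [hca i z, hsum z fun y => max (f i y) 0]
  have hC : (∀ i j, i ≠ j → Compatible (f i) (f j)) ↔
      ∀ y, max (∑ i, f i y) 0 = ∑ i, max (f i y) 0 := by
    simp only [max_sum_eq_iff]
    exact ⟨fun h y i j hij => h i j hij y, fun h i j hij y => h y i j hij⟩
  rw [hC]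
  constructor
  · intro h y
    obtain ⟨z, hz⟩ := hsource y
    have h1 := h z
    simp only at h1
    rw [hL z, hsum z fun y => max (∑ i, f i y) 0] at h1
    have h2 := (Finset.sum_eq_sum_iff_of_le (fun y _ =>
      mul_le_mul_of_nonneg_left (max_sum_le fun i => f i y)
        (Int.natCast_nonneg (m y z)))).mp h1.symm y (by simpa using hz)
    exact mul_left_cancel₀ (by exact_mod_cast hz) h2
  · intro h z
    simp only
    rw [hL z, hsum z fun y => max (∑ i, f i y) 0]
    exact Finset.sum_congr rfl fun y _ => by rw [h y]
end

section
/- Let (V, m, τ) be a stable translation quiver in which every vertex is the source of at least one arrow (for every y ∈ V there exists z ∈ V with m(y,z) ≠ 0). Let f, g : V → ℤ be cluster-additive functions. Then the pointwise difference f − g is cluster-additive if and only if g ≤ f, i.e. g(x)⁺ ≤ f(x)⁺ and g(x)⁻ ≤ f(x)⁻ for all x ∈ V. -/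
theorem stmt_7 {V : Type*} (m : V → V → ℕ) (τ : V ≃ V)
    (hfin : ∀ z, {y | m y z ≠ 0}.Finite)
    (hτ : ∀ y z, m (τ z) y = m y z)
    (hsource : ∀ y : V, ∃ z : V, m y z ≠ 0)
    (f g : V → ℤ)
    (hf : ClusterAdditive m τ f) (hg : ClusterAdditive m τ g) :
    ClusterAdditive m τ (fun x => f x - g x) ↔
      ∀ x, max (g x) 0 ≤ max (f x) 0 ∧ max (-g x) 0 ≤ max (-f x) 0 := by
  have hs : ∀ (u : V → ℤ) (z : V), ∑ᶠ y, (m y z : ℤ) * max (u y) 0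
      = ∑ y ∈ (hfin z).toFinset, (m y z : ℤ) * max (u y) 0 := by
    intro u z
    apply finsum_eq_sum_of_support_subset
    intro y hy
    simp only [Function.mem_support] at hy
    simp only [Set.Finite.coe_toFinset, Set.mem_setOf_eq]
    intro h0
    apply hy
    simp [h0]
  constructor
  · intro hh x
    obtain ⟨z, hz⟩ := hsource x
    have h1 := hf z
    have h2 := hg z
    have h3 := hh z
    rw [hs] at h1 h2
    rw [hs (fun x => f x - g x)] at h3
    have hsum : ∑ y ∈ (hfin z).toFinset,
        (m y z : ℤ) * (max (g y) 0 + max (f y - g y) 0 - max (f y) 0) = 0 := by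
      simp only [mul_sub, mul_add, Finset.sum_sub_distrib, Finset.sum_add_distrib] at h3 ⊢
      linarith
    rw [Finset.sum_eq_zero_iff_of_nonneg] at hsum
    · have h4 := hsum x (by simpa using hz)
      have h5 : (m x z : ℤ) ≠ 0 := by exact_mod_cast hz
      have h6 := (mul_eq_zero.mp h4).resolve_left h5
      omega
    · intro y _
      apply mul_nonneg (by positivity)
      omega
  · intro h z
    have h1 := hf z
    have h2 := hg z
    rw [hs] at h1 h2
    rw [hs (fun x => f x - g x)]
    have e : ∀ y, max (f y - g y) 0 = max (f y) 0 - max (g y) 0 := by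
      intro y
      have := h y
      omega
    simp only [e, mul_sub, Finset.sum_sub_distrib]
    linarith
end

section
/- Let V₀ be a finite nonempty set and c : V₀ × V₀ → ℕ an arrow-multiplicity function such that the transitive closure of the relation {(ξ,η) : c(ξ,η) ≠ 0} is irreflexive (so Δ = (V₀, c) is a finite directed quiver). Then for every function g : V₀ → ℤ there exists a unique cluster-additive function f on ℤΔ with f(ξ, 0) = g(ξ) for all ξ ∈ V₀. -/
/-- The arrow-multiplicity function of the stable translation quiver `ℤΔ`,
for a quiver `Δ` with vertex set `V₀` and arrow multiplicities `c`:
`m((ξ,i),(η,i)) = c(ξ,η)`, `m((ξ,i),(η,i+1)) = c(η,ξ)`, and `0` otherwise. -/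
def ZQuiverMult {V₀ : Type*} (c : V₀ × V₀ → ℕ) (y z : V₀ × ℤ) : ℕ :=
  if z.2 = y.2 then c (y.1, z.1) else if z.2 = y.2 + 1 then c (z.1, y.1) else 0

/-- `f` is cluster-additive on `ℤΔ`, whose translation is `τ(ξ,i) = (ξ,i−1)`. -/
def ZQuiverClusterAdditive {V₀ : Type*} (c : V₀ × V₀ → ℕ) (f : V₀ × ℤ → ℤ) : Prop :=
  ∀ z : V₀ × ℤ, f z + f (z.1, z.2 - 1) = ∑ᶠ y : V₀ × ℤ, (ZQuiverMult c y z : ℤ) * max (f y) 0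

theorem aux_solve {V : Type*} [Fintype V] (c : V × V → ℕ)
    (hd : ∀ ξ : V, ¬ Relation.TransGen (fun a b => c (a, b) ≠ 0) ξ ξ) (d : V → ℤ) :
    ∃! b : V → ℤ, ∀ ξ, b ξ = d ξ + ∑ η, (c (η, ξ) : ℤ) * max (b η) 0 := by
  classical
  have wf : WellFounded (fun a b => c (a, b) ≠ 0) := by
    have : Std.Irrefl (Relation.TransGen (fun a b => c (a, b) ≠ 0)) := ⟨hd⟩
    have h := Finite.wellFounded_of_trans_of_irrefl
      (Relation.TransGen (fun a b => c (a, b) ≠ 0))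
    exact WellFounded.mono h (fun a b hab => Relation.TransGen.single hab)
  refine ⟨wf.fix (fun ξ rec => d ξ + ∑ η, if h : c (η, ξ) ≠ 0 then
    (c (η, ξ) : ℤ) * max (rec η h) 0 else 0), ?_, ?_⟩
  · intro ξ
    rw [WellFounded.fix_eq]
    congr 1
    refine Finset.sum_congr rfl fun η _ => ?_
    split_ifs with h
    · rfl
    · have : c (η, ξ) = 0 := by simpa using h
      simp [this]
  · intro b hb
    funext ξ
    induction ξ using wf.induction with
    | _ ξ ih =>
      rw [WellFounded.fix_eq, hb ξ]
      congr 1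
      refine Finset.sum_congr rfl fun η _ => ?_
      split_ifs with h
      · rw [ih η h]
      · have : c (η, ξ) = 0 := by simpa using h
        simp [this]

theorem aux_finsum {V : Type*} [Fintype V] (c : V × V → ℕ) (f : V × ℤ → ℤ) (ξ : V) (i : ℤ) :
    ∑ᶠ y : V × ℤ, (ZQuiverMult c y (ξ, i) : ℤ) * max (f y) 0 =
      ∑ η, (c (η, ξ) : ℤ) * max (f (η, i)) 0 + ∑ η, (c (ξ, η) : ℤ) * max (f (η, i - 1)) 0 := by
  classical
  rw [finsum_eq_sum_of_support_subset (s := Finset.univ ×ˢ {i, i - 1})]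
  · rw [Finset.sum_product, ← Finset.sum_add_distrib]
    refine Finset.sum_congr rfl fun η _ => ?_
    rw [Finset.sum_pair (by omega)]
    simp [ZQuiverMult]
    intro h
    omega
  · rintro ⟨η, j⟩ h
    simp only [Function.mem_support, ZQuiverMult] at h
    simp only [Finset.coe_product, Set.mem_prod, Finset.coe_univ, Set.mem_univ, true_and,
      Finset.mem_coe, Finset.mem_insert, Finset.mem_singleton]
    by_contra hj
    push Not at hj
    apply h
    rw [if_neg (by omega), if_neg (by omega)]
    simp

theorem stmt_8 {V₀ : Type*} [Fintype V₀] [Nonempty V₀] (c : V₀ × V₀ → ℕ)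
    (hdirected : ∀ ξ : V₀, ¬ Relation.TransGen (fun a b => c (a, b) ≠ 0) ξ ξ)
    (g : V₀ → ℤ) :
    ∃! f : V₀ × ℤ → ℤ, ZQuiverClusterAdditive c f ∧ ∀ ξ : V₀, f (ξ, 0) = g ξ := by
  have hop : ∀ ξ : V₀, ¬ Relation.TransGen (fun a b => c (b, a) ≠ 0) ξ ξ := by
    intro ξ h
    exact hdirected ξ (Relation.transGen_swap.1 h)
  let R : (V₀ → ℤ) → (V₀ → ℤ) → Prop := fun a b => ∀ ξ, b ξ + a ξ =
    ∑ η, (c (η, ξ) : ℤ) * max (b η) 0 + ∑ η, (c (ξ, η) : ℤ) * max (a η) 0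
  have h1 : ∀ a, ∃! b, R a b := by
    intro a
    obtain ⟨b, hb, hu⟩ := aux_solve c hdirected
      (fun ξ => ∑ η, (c (ξ, η) : ℤ) * max (a η) 0 - a ξ)
    refine ⟨b, fun ξ => by have := hb ξ; linarith, fun b' hb' => hu b' ?_⟩
    intro ξ
    have := hb' ξ
    linarith
  have h2 : ∀ b, ∃! a, R a b := by
    intro b
    obtain ⟨a, ha, hu⟩ := aux_solve (fun p => c (p.2, p.1)) hop
      (fun ξ => ∑ η, (c (η, ξ) : ℤ) * max (b η) 0 - b ξ)
    refine ⟨a, fun ξ => by have := ha ξ; simp only at this; linarith, fun b' hb' => hu b' ?_⟩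
    intro ξ
    have := hb' ξ
    linarith
  choose S hS hSu using h1
  choose T hT hTu using h2
  simp only at hS hSu hT hTu
  let e : Equiv.Perm (V₀ → ℤ) :=
    ⟨S, T, fun a => (hTu _ _ (hS a)).symm, fun b => (hSu _ _ (hT b)).symm⟩
  have key : ∀ f : V₀ × ℤ → ℤ, ZQuiverClusterAdditive c f ↔
      ∀ i : ℤ, (fun ξ => f (ξ, i)) = e (fun ξ => f (ξ, i - 1)) := by
    intro f
    constructor
    · intro h i
      refine hSu _ _ fun ξ => ?_
      rw [← aux_finsum]
      exact h (ξ, i)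
    · rintro h ⟨ξ, i⟩
      rw [aux_finsum]
      have h3 := hS (fun ξ => f (ξ, i - 1))
      have h4 : S (fun ξ => f (ξ, i - 1)) = fun ξ => f (ξ, i) := (h i).symm
      rw [h4] at h3
      exact h3 ξ
  refine ⟨fun p => (e ^ p.2) g p.1, ⟨(key _).2 fun i => ?_, fun ξ => by simp⟩, ?_⟩
  · change (e ^ i) g = e ((e ^ (i - 1)) g)
    rw [← Equiv.Perm.mul_apply, ← zpow_one_add]
    congr 2
    ring
  · rintro f ⟨hf, h0⟩
    rw [key] at hf
    have main : ∀ i : ℤ, (fun ξ => f (ξ, i)) = (e ^ i) g := by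
      intro i
      induction i using Int.induction_on with
      | zero => funext ξ; simpa using h0 ξ
      | succ n ih =>
        rw [hf, add_sub_cancel_right, ih, ← Equiv.Perm.mul_apply, ← zpow_one_add, add_comm]
      | pred n ih =>
        apply e.injective
        rw [← hf, ih, ← Equiv.Perm.mul_apply, ← zpow_one_add]
        congr 2
        ring
    funext ⟨ξ, i⟩
    exact congrFun (main i) ξ
end

section
/- Let n ≥ 1 and let x be a vertex of ℤA_n with cluster-hammock function h_x. Then h_x(σ(y)) = h_x(y) for every vertex y; h_x(σ^k(x)) = −1 for every k ∈ ℤ; and h_x(y) ≥ 0 for every vertex y which is not of the form σ^k(x) with k ∈ ℤ. -/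
/-- The slice of `ℤA_n` through the vertex `x = (i,p)`:
`S_x = {(i,q) : p ≤ q ≤ n} ∪ {(i+p−q, q) : 1 ≤ q ≤ p−1}`. -/
def ZAInSlice (n : ℤ) (x y : ℤ × ℤ) : Prop :=
  (y.1 = x.1 ∧ x.2 ≤ y.2 ∧ y.2 ≤ n) ∨
  (y.1 = x.1 + x.2 - y.2 ∧ 1 ≤ y.2 ∧ y.2 ≤ x.2 - 1)

/-- `h` is a cluster-hammock function at the vertex `x` of `ℤA_n`:
it is cluster-additive, takes the value `-1` at `x`, and vanishes on the
remaining vertices of the slice through `x`. -/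
def ZAIsHammock (n : ℤ) (x : ℤ × ℤ) (h : ℤ × ℤ → ℤ) : Prop :=
  ZAClusterAdditive n h ∧ h x = -1 ∧ ∀ y, ZAInSlice n x y → y ≠ x → h y = 0

/-- The translation-quiver automorphism `σ(i,p) = (i+p+1, n+1−p)` of `ℤA_n`,
realizing the functor `F = τ⁻¹[1]`. -/
def ZASigma (n : ℤ) : Equiv.Perm (ℤ × ℤ) where
  toFun v := (v.1 + v.2 + 1, n + 1 - v.2)
  invFun v := (v.1 + v.2 - n - 2, n + 1 - v.2)
  left_inv v := by obtain ⟨i, p⟩ := v; simp only [Prod.mk.injEq]; constructor <;> ring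
  right_inv v := by obtain ⟨i, p⟩ := v; simp only [Prod.mk.injEq]; constructor <;> ring

/-- Crossing number of the diagonal `{u,v}` with the diagonal `{0,m}` (and `-1` if equal). -/
def crossG (m u v : ℤ) : ℤ :=
  if (u = 0 ∧ v = m) ∨ (u = m ∧ v = 0) then -1
  else if (0 < u ∧ u < m ∧ m < v) ∨ (0 < v ∧ v < m ∧ m < u) then 1 else 0

/-- The explicit hammock function. -/
def hamG (n a b : ℤ) (y : ℤ × ℤ) : ℤ :=
  crossG (b + 1) ((y.1 - a) % (n + 3)) ((y.1 + y.2 + 1 - a) % (n + 3))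

lemma emod_succ_aux (N t : ℤ) (hN : 2 ≤ N) :
    (t + 1) % N = if t % N = N - 1 then 0 else t % N + 1 := by
  have h0 := Int.emod_nonneg t (show N ≠ 0 by omega)
  have h1 := Int.emod_lt_of_pos t (show 0 < N by omega)
  have h2 := Int.emod_add_mul_ediv t N
  split_ifs with h
  · have : t + 1 = N * (t / N + 1) := by linarith
    rw [this]; exact Int.mul_emod_right _ _
  · have : t + 1 = (t % N + 1) + N * (t / N) := by linarith
    rw [this, Int.add_mul_emod_self_left]
    exact Int.emod_eq_of_lt (by omega) (by omega)

lemma emod_add_aux (N t d : ℤ) (hd : 0 ≤ d) (hdN : d < N) :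
    (t + d) % N = if t % N + d < N then t % N + d else t % N + d - N := by
  have h0 := Int.emod_nonneg t (show N ≠ 0 by omega)
  have h1 := Int.emod_lt_of_pos t (show 0 < N by omega)
  have h2 := Int.emod_add_mul_ediv t N
  split_ifs with h
  · have : t + d = (t % N + d) + N * (t / N) := by linarith
    rw [this, Int.add_mul_emod_self_left]
    exact Int.emod_eq_of_lt (by omega) (by omega)
  · have : t + d = (t % N + d - N) + N * (t / N + 1) := by linarith
    rw [this, Int.add_mul_emod_self_left]
    exact Int.emod_eq_of_lt (by omega) (by omega)

lemma cross_mesh (N m p r s r' s' : ℤ) (hm : 2 ≤ m) (hmN : m ≤ N - 2)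
    (hp : 1 ≤ p) (hpn : p ≤ N - 3) (hr : 0 ≤ r) (hrN : r < N)
    (hs : s = if r + (p + 1) < N then r + (p + 1) else r + (p + 1) - N)
    (hr' : r' = if r = N - 1 then 0 else r + 1)
    (hs' : s' = if s = N - 1 then 0 else s + 1) :
    crossG m r' s' + crossG m r s =
      (if 2 ≤ p then max (crossG m r' s) 0 else 0) +
      (if p ≤ N - 3 - 1 then max (crossG m r s') 0 else 0) := by
  have e1 : (if 2 ≤ p then max (crossG m r' s) 0 else 0) =
      if (0 < r' ∧ r' < m ∧ m < s) ∨ (0 < s ∧ s < m ∧ m < r') then 1 else 0 := by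
    unfold crossG
    split_ifs at * <;> first | rfl | omega
  have e2 : (if p ≤ N - 3 - 1 then max (crossG m r s') 0 else 0) =
      if (0 < r ∧ r < m ∧ m < s') ∨ (0 < s' ∧ s' < m ∧ m < r) then 1 else 0 := by
    unfold crossG
    split_ifs at * <;> first | rfl | omega
  rw [e1, e2]
  unfold crossG
  clear e1 e2
  split_ifs at hs hr' hs' <;> subst hr' <;> subst hs' <;> split_ifs <;> first | rfl | omega

lemma hamG_additive (n a b : ℤ) (hn : 1 ≤ n) (hb : 1 ≤ b) (hbn : b ≤ n) :
    ZAClusterAdditive n (hamG n a b) := by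
  intro i p hp hpn
  have h0 := Int.emod_nonneg (i - 1 - a) (show n + 3 ≠ 0 by omega)
  have h1 := Int.emod_lt_of_pos (i - 1 - a) (show 0 < n + 3 by omega)
  have hs := emod_add_aux (n + 3) (i - 1 - a) (p + 1) (by omega) (by omega)
  have hr' := emod_succ_aux (n + 3) (i - 1 - a) (by omega)
  have hs' := emod_succ_aux (n + 3) (i - 1 - a + (p + 1)) (by omega)
  have key := cross_mesh (n + 3) (b + 1) p _ _ _ _ (by omega) (by omega) hp (by omega) h0 h1 hs hr' hs'
  unfold hamG
  simp only
  rw [show i - a = i - 1 - a + 1 by ring, show i + p + 1 - a = i - 1 - a + (p + 1) + 1 by ring,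
    show i - 1 + p + 1 - a = i - 1 - a + (p + 1) by ring,
    show i + (p - 1) + 1 - a = i - 1 - a + (p + 1) by ring,
    show i - 1 + (p + 1) + 1 - a = i - 1 - a + (p + 1) + 1 by ring]
  rw [show n + 3 - 3 - 1 = n - 1 by ring] at key
  exact key

lemma back_step {n : ℤ} {f g : ℤ × ℤ → ℤ} (hf : ZAClusterAdditive n f)
    (hg : ZAClusterAdditive n g) (i K : ℤ) (hK : K ≤ n)
    (h1 : ∀ q, 1 ≤ q → q ≤ K → f (i, q) = g (i, q))
    (h2 : K < n → f (i - 1, K + 1) = g (i - 1, K + 1)) :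
    ∀ q, 1 ≤ q → q ≤ K → f (i - 1, q) = g (i - 1, q) := by
  have main : ∀ d : ℕ, ∀ q, q = K - d → 1 ≤ q → f (i - 1, q) = g (i - 1, q) := by
    intro d
    induction d with
    | zero =>
      intro q hq hq1
      have hq' : q = K := by simpa using hq
      subst hq'
      have a1 := hf i q hq1 hK
      have a2 := hg i q hq1 hK
      have a3 := h1 q hq1 le_rfl
      have a4 : 2 ≤ q → f (i, q - 1) = g (i, q - 1) := fun _ => h1 _ (by omega) (by omega)
      rw [a3] at a1
      have b1 : (if 2 ≤ q then max (f (i, q - 1)) 0 else 0) =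
          (if 2 ≤ q then max (g (i, q - 1)) 0 else 0) := by
        by_cases c : 2 ≤ q
        · rw [a4 c]
        · simp only [c, if_false]
      have b2 : (if q ≤ n - 1 then max (f (i - 1, q + 1)) 0 else 0) =
          (if q ≤ n - 1 then max (g (i - 1, q + 1)) 0 else 0) := by
        by_cases c : q ≤ n - 1
        · rw [h2 (by omega)]
        · simp only [c, if_false]
      linarith
    | succ d ih =>
      intro q hq hq1
      push_cast at hq
      have a1 := hf i q hq1 (by omega)
      have a2 := hg i q hq1 (by omega)
      have a3 := h1 q hq1 (by omega)
      have a5 := ih (q + 1) (by omega) (by omega)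
      have a4 : 2 ≤ q → f (i, q - 1) = g (i, q - 1) := fun _ => h1 _ (by omega) (by omega)
      rw [a5, a3] at a1
      by_cases c : 2 ≤ q
      · rw [a4 c] at a1; linarith
      · simp only [c, if_false] at a1 a2; linarith
  intro q hq hqK
  exact main (K - q).toNat q (by omega) hq

lemma fwd_step {n : ℤ} {f g : ℤ × ℤ → ℤ} (hf : ZAClusterAdditive n f)
    (hg : ZAClusterAdditive n g) (i : ℤ)
    (h1 : ∀ q, 1 ≤ q → q ≤ n → f (i - 1, q) = g (i - 1, q)) :
    ∀ q, 1 ≤ q → q ≤ n → f (i, q) = g (i, q) := by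
  have main : ∀ d : ℕ, (d : ℤ) + 1 ≤ n → f (i, (d : ℤ) + 1) = g (i, (d : ℤ) + 1) := by
    intro d
    induction d with
    | zero =>
      intro hq
      have a1 := hf i 1 le_rfl (by simpa using hq)
      have a2 := hg i 1 le_rfl (by simpa using hq)
      have a3 := h1 1 le_rfl (by simpa using hq)
      simp only [Nat.cast_zero, zero_add]
      rw [a3] at a1
      by_cases c : 1 ≤ n - 1
      · rw [h1 (1 + 1) (by omega) (by omega)] at a1; norm_num at a1 a2; linarith
      · simp only [c, if_false] at a1 a2; norm_num at a1 a2; linarith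
    | succ d ih =>
      intro hq
      push_cast at hq ⊢
      have a1 := hf i (d + 1 + 1) (by omega) hq
      have a2 := hg i (d + 1 + 1) (by omega) hq
      have a3 := h1 (d + 1 + 1) (by omega) hq
      have a5 := ih (by omega)
      rw [show (d : ℤ) + 1 + 1 - 1 = d + 1 by ring] at a1 a2
      rw [a5, a3] at a1
      by_cases c : (d : ℤ) + 1 + 1 ≤ n - 1
      · rw [h1 (d + 1 + 1 + 1) (by omega) (by omega)] at a1; linarith
      · simp only [c, if_false] at a1 a2; linarith
  intro q hq hqn
  have := main (q - 1).toNat (by omega)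
  rwa [show (((q - 1).toNat : ℕ) : ℤ) + 1 = q by omega] at this

lemma eq_of_slice {n : ℤ} {f g : ℤ × ℤ → ℤ} (hf : ZAClusterAdditive n f)
    (hg : ZAClusterAdditive n g) (a b : ℤ) (hb : 1 ≤ b) (hbn : b ≤ n)
    (hs : ∀ y, ZAInSlice n (a, b) y → f y = g y) :
    ∀ i q, 1 ≤ q → q ≤ n → f (i, q) = g (i, q) := by
  have tri : ∀ d : ℕ, (d : ℤ) ≤ b - 1 → ∀ q, 1 ≤ q → q ≤ (d : ℤ) + 1 →
      f (a + b - 1 - d, q) = g (a + b - 1 - d, q) := by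
    have sl : ∀ d : ℕ, (d : ℤ) ≤ b - 1 →
      f (a + b - 1 - d, d + 1) = g (a + b - 1 - d, d + 1) := by
      intro d hd
      apply hs
      unfold ZAInSlice
      simp only
      omega
    intro d
    induction d with
    | zero =>
      intro hd q h1 h2
      have : q = 1 := by push_cast at h2; omega
      subst this
      simpa using sl 0 hd
    | succ d ih =>
      intro hd q h1 h2
      push_cast at hd h2
      have s := sl (d + 1) (by push_cast; omega)
      push_cast at s ⊢
      rw [show a + b - 1 - ((d : ℤ) + 1) = a + b - 1 - d - 1 by ring] at s ⊢
      by_cases c : q = d + 1 + 1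
      · subst c; exact s
      · exact back_step hf hg (a + b - 1 - d) (d + 1) (by omega) (ih (by omega)) (fun _ => s) q h1
          (by omega)
  have col : ∀ q, 1 ≤ q → q ≤ n → f (a, q) = g (a, q) := by
    intro q h1 h2
    by_cases c : q ≤ b
    · have := tri (b - 1).toNat (by omega) q h1 (by omega)
      rwa [show a + b - 1 - (((b - 1).toNat : ℕ) : ℤ) = a by omega] at this
    · exact hs _ (Or.inl ⟨rfl, (not_le.mp c).le, h2⟩)
  intro i
  induction i using Int.inductionOn' (b := a) with
  | zero => exact col
  | succ k _ ih =>
    apply fwd_step hf hg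
    rwa [show k + 1 - 1 = k by ring]
  | pred k _ ih =>
    exact back_step hf hg k n le_rfl ih (fun h => absurd h (lt_irrefl _))

lemma hamG_self (n a b : ℤ) (hb : 1 ≤ b) (hbn : b ≤ n) : hamG n a b (a, b) = -1 := by
  have e : (b + 1) % (n + 3) = b + 1 := Int.emod_eq_of_lt (by omega) (by omega)
  unfold hamG crossG
  simp only [sub_self, Int.zero_emod, show a + b + 1 - a = b + 1 by ring, e]
  simp

lemma hamG_slice (n a b : ℤ) (hb : 1 ≤ b) (hbn : b ≤ n) (y : ℤ × ℤ)
    (hy : ZAInSlice n (a, b) y) (hne : y ≠ (a, b)) : hamG n a b y = 0 := by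
  obtain ⟨i, q⟩ := y
  have hne' : ¬ (i = a ∧ q = b) := by simpa using hne
  unfold ZAInSlice at hy
  simp only at hy
  have e1 : (i - a) % (n + 3) = i - a := Int.emod_eq_of_lt (by omega) (by omega)
  have e2 : (i + q + 1 - a) % (n + 3) = i + q + 1 - a := Int.emod_eq_of_lt (by omega) (by omega)
  unfold hamG crossG
  simp only [e1, e2]
  split_ifs <;> omega

lemma crossG_symm (m u v : ℤ) : crossG m u v = crossG m v u := by
  unfold crossG
  split_ifs <;> first | rfl | omega

lemma hamG_sigma (n a b : ℤ) (y : ℤ × ℤ) : hamG n a b (ZASigma n y) = hamG n a b y := by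
  obtain ⟨i, q⟩ := y
  have e : ZASigma n (i, q) = (i + q + 1, n + 1 - q) := rfl
  rw [e]
  unfold hamG
  simp only
  rw [crossG_symm, show i + q + 1 + (n + 1 - q) + 1 - a = (i - a) + (n + 3) by ring,
    Int.add_emod_right]

lemma sigma_even (n : ℤ) (v : ℤ × ℤ) (k : ℤ) :
    (ZASigma n ^ (2 * k)) v = (v.1 + k * (n + 3), v.2) := by
  have e2 : ∀ w : ℤ × ℤ, (ZASigma n ^ (2 : ℤ)) w = (w.1 + (n + 3), w.2) := by
    intro w
    have : (ZASigma n ^ (2 : ℤ)) w = ZASigma n (ZASigma n w) := by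
      rw [zpow_two]; rfl
    rw [this]
    have e (i q : ℤ) : ZASigma n (i, q) = (i + q + 1, n + 1 - q) := rfl
    obtain ⟨i, q⟩ := w
    rw [e, e]
    ext <;> simp only <;> ring
  induction k using Int.induction_on with
  | zero => simp
  | succ k ih =>
    rw [show (2 : ℤ) * (k + 1) = 2 + 2 * k by ring, zpow_add, Equiv.Perm.mul_apply, ih, e2]
    ext <;> simp only <;> ring
  | pred k ih =>
    apply (ZASigma n ^ (2 : ℤ)).injective
    rw [← Equiv.Perm.mul_apply, ← zpow_add, show (2 : ℤ) + 2 * (-(k : ℤ) - 1) = 2 * (-k) by ring,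
      ih, e2]
    ext <;> simp only <;> ring

lemma sigma_odd (n : ℤ) (v : ℤ × ℤ) (k : ℤ) :
    (ZASigma n ^ (2 * k + 1)) v = (v.1 + k * (n + 3) + v.2 + 1, n + 1 - v.2) := by
  rw [add_comm, zpow_add, Equiv.Perm.mul_apply, sigma_even, zpow_one]
  rfl

lemma hamG_neg (n a b i q : ℤ) (hb : 1 ≤ b) (hbn : b ≤ n) (hq : 1 ≤ q) (hqn : q ≤ n)
    (hneg : hamG n a b (i, q) < 0) : ∃ k : ℤ, (i, q) = (ZASigma n ^ k) (a, b) := by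
  have hs := emod_add_aux (n + 3) (i - a) (q + 1) (by omega) (by omega)
  have h2 := Int.emod_add_mul_ediv (i - a) (n + 3)
  have h3 : (i - a) / (n + 3) * (n + 3) = (n + 3) * ((i - a) / (n + 3)) := mul_comm _ _
  rw [show i - a + (q + 1) = i + q + 1 - a by ring] at hs
  unfold hamG crossG at hneg
  simp only at hneg
  have c : ((i - a) % (n + 3) = 0 ∧ (i + q + 1 - a) % (n + 3) = b + 1) ∨
      ((i - a) % (n + 3) = b + 1 ∧ (i + q + 1 - a) % (n + 3) = 0) := by
    split_ifs at hneg with c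
    · exact c
    · omega
    · omega
  rcases c with ⟨c1, c2⟩ | ⟨c1, c2⟩
  · refine ⟨2 * ((i - a) / (n + 3)), ?_⟩
    rw [sigma_even]
    simp only [h3, Prod.mk.injEq]
    split_ifs at hs <;> constructor <;> linarith
  · refine ⟨2 * ((i - a) / (n + 3)) + 1, ?_⟩
    rw [sigma_odd]
    simp only [h3, Prod.mk.injEq]
    split_ifs at hs <;> constructor <;> linarith

theorem stmt_10 (n : ℤ) (hn : 1 ≤ n) (x : ℤ × ℤ) (hx1 : 1 ≤ x.2) (hxn : x.2 ≤ n)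
    (h : ℤ × ℤ → ℤ) (hh : ZAIsHammock n x h) :
    (∀ y : ℤ × ℤ, 1 ≤ y.2 → y.2 ≤ n → h (ZASigma n y) = h y) ∧
    (∀ k : ℤ, h ((ZASigma n ^ k) x) = -1) ∧
    (∀ y : ℤ × ℤ, 1 ≤ y.2 → y.2 ≤ n → (∀ k : ℤ, y ≠ (ZASigma n ^ k) x) → 0 ≤ h y) := by
  obtain ⟨a, b⟩ := x
  simp only at hx1 hxn
  obtain ⟨hadd, hx, hsl⟩ := hh
  have E : ∀ i q, 1 ≤ q → q ≤ n → h (i, q) = hamG n a b (i, q) := by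
    apply eq_of_slice hadd (hamG_additive n a b hn hx1 hxn) a b hx1 hxn
    intro y hy
    by_cases c : y = (a, b)
    · rw [c, hx, hamG_self n a b hx1 hxn]
    · rw [hsl y hy c, hamG_slice n a b hx1 hxn y hy c]
  have S : ∀ y : ℤ × ℤ, 1 ≤ y.2 → y.2 ≤ n → h (ZASigma n y) = h y := by
    rintro ⟨i, q⟩ h1 h2
    simp only at h1 h2
    rw [E i q h1 h2, ← hamG_sigma]
    exact E (i + q + 1) (n + 1 - q) (by omega) (by omega)
  have ev : ∀ k : ℤ, h ((ZASigma n ^ (2 * k)) (a, b)) = -1 := by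
    intro k
    rw [sigma_even, E _ _ hx1 hxn, ← hamG_self n a b hx1 hxn]
    unfold hamG
    simp only
    rw [show a + k * (n + 3) - a = (a - a) + (n + 3) * k by ring,
      show a + k * (n + 3) + b + 1 - a = (a + b + 1 - a) + (n + 3) * k by ring,
      Int.add_mul_emod_self_left, Int.add_mul_emod_self_left]
  refine ⟨S, ?_, ?_⟩
  · intro k
    rcases Int.even_or_odd' k with ⟨c, rfl | rfl⟩
    · exact ev c
    · rw [add_comm, zpow_add, Equiv.Perm.mul_apply, zpow_one, S, ev c]
      · rw [sigma_even]; exact hx1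
      · rw [sigma_even]; exact hxn
  · rintro ⟨i, q⟩ h1 h2 hk
    by_contra hneg
    simp only at h1 h2
    rw [E i q h1 h2] at hneg
    obtain ⟨k, hk'⟩ := hamG_neg n a b i q hx1 hxn h1 h2 (by omega)
    exact hk k hk'
end

section
/- Let n ≥ 1 and let T be a finite set of vertices of ℤA_n lying in pairwise distinct σ-orbits and satisfying h_x(x') = 0 for all x ≠ x' in T. Let (n_x)_{x∈T} be non-negative integers and put f = Σ_{x∈T} n_x·h_x (pointwise). Then f(x) = −n_x for every x ∈ T; f(y) ≥ 0 for every vertex y whose σ-orbit is disjoint from T; and consequently f = Σ_{x∈T} f(x)⁻·h_x. -/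
/-- crossing-number function in local coordinates: the arc from `a` to `a+p+1` on the
`(n+3)`-gon against the arc from `0` to `m`. -/
def zaG (n m a p : ℤ) : ℤ :=
  if a + p + 1 < n + 3 then
    (if a = 0 ∧ a + p + 1 = m then -1
     else if (0 < a ∧ a < m ∧ m < a + p + 1) then 1 else 0)
  else
    (if a = m ∧ a + p + 1 = n + 3 then -1
     else if (m < a ∧ n + 3 < a + p + 1 ∧ a + p + 1 < n + 3 + m) then 1
     else 0)

lemma zaG_lt (n m a p : ℤ) (h : a + p + 1 < n + 3) : zaG n m a p =
    if a = 0 ∧ a + p + 1 = m then -1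
     else if (0 < a ∧ a < m ∧ m < a + p + 1) then 1 else 0 := if_pos h

lemma zaG_ge (n m a p : ℤ) (h : ¬ a + p + 1 < n + 3) : zaG n m a p =
    if a = m ∧ a + p + 1 = n + 3 then -1
     else if (m < a ∧ n + 3 < a + p + 1 ∧ a + p + 1 < n + 3 + m) then 1
     else 0 := if_neg h

lemma zaG_mesh (n m a p : ℤ) (hm : 2 ≤ m) (hm' : m ≤ n + 1) (ha : 0 ≤ a) (ha' : a < n + 3)
    (hp : 1 ≤ p) (hp' : p ≤ n) :
    zaG n m (if a + 1 < n + 3 then a + 1 else 0) p + zaG n m a p =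
      (if 2 ≤ p then max (zaG n m (if a + 1 < n + 3 then a + 1 else 0) (p - 1)) 0 else 0) +
      (if p ≤ n - 1 then max (zaG n m a (p + 1)) 0 else 0) := by
  have hA : ∀ b, b < n + 3 → (if 2 ≤ p then max (zaG n m b (p - 1)) 0 else 0) =
      max (zaG n m b (p - 1)) 0 := by
    intro b hb
    split_ifs with h
    · rfl
    · symm
      apply max_eq_right
      unfold zaG
      split_ifs <;> omega
  have hB : (if p ≤ n - 1 then max (zaG n m a (p + 1)) 0 else 0) =
      max (zaG n m a (p + 1)) 0 := by
    split_ifs with h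
    · rfl
    · symm
      apply max_eq_right
      unfold zaG
      split_ifs <;> omega
  rw [hA _ (by split_ifs <;> omega), hB]
  clear hA hB
  by_cases h1 : a + 1 < n + 3
  · simp only [if_pos h1]
    by_cases h3 : a + p + 2 < n + 3
    · rw [zaG_lt _ _ (a + 1) p (by omega), zaG_lt _ _ a p (by omega),
        zaG_lt _ _ (a + 1) (p - 1) (by omega), zaG_lt _ _ a (p + 1) (by omega)]
      split_ifs <;> omega
    · by_cases h2 : a + p + 1 < n + 3
      · rw [zaG_ge _ _ (a + 1) p (by omega), zaG_lt _ _ a p (by omega),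
          zaG_lt _ _ (a + 1) (p - 1) (by omega), zaG_ge _ _ a (p + 1) (by omega)]
        split_ifs <;> omega
      · rw [zaG_ge _ _ (a + 1) p (by omega), zaG_ge _ _ a p (by omega),
          zaG_ge _ _ (a + 1) (p - 1) (by omega), zaG_ge _ _ a (p + 1) (by omega)]
        split_ifs <;> omega
  · simp only [if_neg h1]
    rw [zaG_lt _ _ 0 p (by omega), zaG_ge _ _ a p (by omega),
      zaG_lt _ _ 0 (p - 1) (by omega), zaG_ge _ _ a (p + 1) (by omega)]
    split_ifs <;> omega

/-- the crossing function on the whole quiver -/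
def zaGlob (n : ℤ) (x y : ℤ × ℤ) : ℤ := zaG n (x.2 + 1) ((y.1 - x.1) % (n + 3)) y.2

lemma emod_succ_cases (N t : ℤ) (hN : 1 < N) :
    (t + 1) % N = if t % N + 1 < N then t % N + 1 else 0 := by
  have h0 := Int.emod_nonneg t (by omega : N ≠ 0)
  have h1 := Int.emod_lt_of_pos t (by omega : 0 < N)
  rw [← Int.emod_add_emod]
  split_ifs with h
  · exact Int.emod_eq_of_lt (by omega) h
  · have : t % N + 1 = N := by omega
    rw [this, Int.emod_self]

lemma zaGlob_additive (n : ℤ) (hn : 1 ≤ n) (x : ℤ × ℤ) (hx : 1 ≤ x.2) (hx' : x.2 ≤ n) :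
    ZAClusterAdditive n (zaGlob n x) := by
  intro i p hp hp'
  have h0 := Int.emod_nonneg (i - 1 - x.1) (by omega : n + 3 ≠ 0)
  have h1 := Int.emod_lt_of_pos (i - 1 - x.1) (by omega : 0 < n + 3)
  have e := emod_succ_cases (n + 3) (i - 1 - x.1) (by omega)
  rw [show i - 1 - x.1 + 1 = i - x.1 by ring] at e
  unfold zaGlob
  simp only [e]
  exact zaG_mesh n (x.2 + 1) _ p (by omega) (by omega) h0 h1 hp hp'

lemma zaGlob_hammock (n : ℤ) (hn : 1 ≤ n) (x : ℤ × ℤ) (hx : 1 ≤ x.2) (hx' : x.2 ≤ n) :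
    ZAIsHammock n x (zaGlob n x) := by
  refine ⟨zaGlob_additive n hn x hx hx', ?_, ?_⟩
  · simp only [zaGlob, sub_self, Int.zero_emod]
    rw [zaG_lt _ _ _ _ (by omega), if_pos ⟨rfl, by omega⟩]
  · rintro ⟨i, q⟩ hy hne
    obtain ⟨j, p⟩ := x
    simp only [ZAInSlice, ne_eq, Prod.mk.injEq] at *
    have e : (i - j) % (n + 3) = i - j := Int.emod_eq_of_lt (by omega) (by omega)
    simp only [zaGlob, e, zaG]
    split_ifs <;> omega

lemma za_unique (n : ℤ) (x : ℤ × ℤ) (hx : 1 ≤ x.2) (hx' : x.2 ≤ n) (f g : ℤ × ℤ → ℤ)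
    (hf : ZAIsHammock n x f) (hg : ZAIsHammock n x g) (y : ℤ × ℤ) (hy : 1 ≤ y.2)
    (hy' : y.2 ≤ n) : f y = g y := by
  obtain ⟨j, p⟩ := x
  obtain ⟨fa, f1, f0⟩ := hf
  obtain ⟨ga, g1, g0⟩ := hg
  have base : ∀ i q : ℤ, ZAInSlice n (j, p) (i, q) → f (i, q) = g (i, q) := by
    intro i q hs
    by_cases e : ((i, q) : ℤ × ℤ) = (j, p)
    · rw [e, f1, g1]
    · rw [f0 _ hs e, g0 _ hs e]
  simp only [ZAInSlice] at base hx hx'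
  have fwd : ∀ k : ℕ, ∀ i q : ℤ, 1 ≤ q → q ≤ n → j ≤ i → j + p ≤ i + q →
      2 * i + q - 2 * j - p ≤ k → f (i, q) = g (i, q) := by
    intro k
    induction k with
    | zero =>
      intro i q h1 h2 h3 h4 h5
      exact base i q (by push_cast at h5; omega)
    | succ k ih =>
      intro i q h1 h2 h3 h4 h5
      push_cast at h5
      by_cases hs : i = j ∨ i + q = j + p
      · exact base i q (by omega)
      · have a := fa i q h1 h2
        have b := ga i q h1 h2
        have c1 := ih (i - 1) q h1 h2 (by omega) (by omega) (by omega)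
        have c2 : 2 ≤ q → f (i, q - 1) = g (i, q - 1) := fun h =>
          ih i (q - 1) (by omega) (by omega) (by omega) (by omega) (by omega)
        have c3 : q ≤ n - 1 → f (i - 1, q + 1) = g (i - 1, q + 1) := fun h =>
          ih (i - 1) (q + 1) (by omega) (by omega) (by omega) (by omega) (by omega)
        have d2 : (if 2 ≤ q then max (f (i, q - 1)) 0 else 0) =
            (if 2 ≤ q then max (g (i, q - 1)) 0 else 0) := by
          split_ifs with h
          · rw [c2 h]
          · rfl
        have d3 : (if q ≤ n - 1 then max (f (i - 1, q + 1)) 0 else 0) =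
            (if q ≤ n - 1 then max (g (i - 1, q + 1)) 0 else 0) := by
          split_ifs with h
          · rw [c3 h]
          · rfl
        rw [d2, d3] at a
        rw [c1] at a; exact (add_left_injective _ (a.trans b.symm))
  have bwd : ∀ k : ℕ, ∀ i q : ℤ, 1 ≤ q → q ≤ n → (i ≤ j ∨ i + q ≤ j + p) →
      2 * j + p + n - 2 * i - q ≤ k → f (i, q) = g (i, q) := by
    intro k
    induction k with
    | zero =>
      intro i q h1 h2 h3 h4
      by_cases hs : j ≤ i ∧ j + p ≤ i + q
      · exact base i q (by omega)
      · exfalso; push_cast at h4; omega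
    | succ k ih =>
      intro i q h1 h2 h3 h5
      push_cast at h5
      by_cases hs : j ≤ i ∧ j + p ≤ i + q
      · exact base i q (by omega)
      · have a := fa (i + 1) q h1 h2
        have b := ga (i + 1) q h1 h2
        rw [add_sub_cancel_right] at a b
        have c1 := ih (i + 1) q h1 h2 (by omega) (by omega)
        have c2 : 2 ≤ q → f (i + 1, q - 1) = g (i + 1, q - 1) := fun h =>
          ih (i + 1) (q - 1) (by omega) (by omega) (by omega) (by omega)
        have c3 : q ≤ n - 1 → f (i, q + 1) = g (i, q + 1) := fun h =>
          ih i (q + 1) (by omega) (by omega) (by omega) (by omega)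
        have d2 : (if 2 ≤ q then max (f (i + 1, q - 1)) 0 else 0) =
            (if 2 ≤ q then max (g (i + 1, q - 1)) 0 else 0) := by
          split_ifs with h
          · rw [c2 h]
          · rfl
        have d3 : (if q ≤ n - 1 then max (f (i, q + 1)) 0 else 0) =
            (if q ≤ n - 1 then max (g (i, q + 1)) 0 else 0) := by
          split_ifs with h
          · rw [c3 h]
          · rfl
        rw [d2, d3] at a
        rw [c1] at a; exact (add_right_injective _ (a.trans b.symm))
  obtain ⟨i, q⟩ := y
  by_cases hs : j ≤ i ∧ j + p ≤ i + q
  · exact fwd (2 * i + q - 2 * j - p).toNat i q hy hy' hs.1 hs.2 (Int.self_le_toNat _)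
  · exact bwd (2 * j + p + n - 2 * i - q).toNat i q hy hy' (by omega) (Int.self_le_toNat _)

lemma zaSigma_two (n i p : ℤ) (k : ℤ) :
    (ZASigma n ^ (2 * k)) (i, p) = (i + (n + 3) * k, p) := by
  rw [zpow_mul]
  have e : ∀ i : ℤ, (ZASigma n ^ (2 : ℤ)) (i, p) = (i + (n + 3), p) := by
    intro i
    rw [zpow_two, Equiv.Perm.mul_apply]
    simp only [ZASigma, Equiv.coe_fn_mk, Prod.mk.injEq]
    constructor <;> ring
  induction k using Int.induction_on with
  | zero => simp
  | succ k ih =>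
    rw [add_comm, zpow_one_add, Equiv.Perm.mul_apply, ih, e, Prod.mk.injEq]
    exact ⟨by ring, rfl⟩
  | pred k ih =>
    rw [sub_eq_neg_add, zpow_add, Equiv.Perm.mul_apply, ih, zpow_neg_one,
      Equiv.Perm.inv_eq_iff_eq, e, Prod.mk.injEq]
    exact ⟨by ring, rfl⟩

lemma zaGlob_nonneg (n : ℤ) (hn : 1 ≤ n) (x y : ℤ × ℤ)
    (hy : ∀ k : ℤ, (ZASigma n ^ k) x ≠ y) : 0 ≤ zaGlob n x y := by
  obtain ⟨j, p⟩ := x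
  obtain ⟨i, q⟩ := y
  have hd := Int.emod_add_mul_ediv (i - j) (n + 3)
  have h1 := hy (2 * ((i - j) / (n + 3)))
  have h2 := hy (1 + 2 * ((i - j) / (n + 3)))
  rw [zpow_one_add, Equiv.Perm.mul_apply] at h2
  rw [zaSigma_two] at h1 h2
  simp only [ZASigma, Equiv.coe_fn_mk, ne_eq, Prod.mk.injEq] at h1 h2
  simp only [zaGlob, zaG]
  generalize (n + 3) * ((i - j) / (n + 3)) = M at *
  generalize (i - j) % (n + 3) = a at *
  split_ifs <;> omega

theorem stmt_11 (n : ℤ) (hn : 1 ≤ n) (T : Finset (ℤ × ℤ))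
    (hT : ∀ x ∈ T, 1 ≤ x.2 ∧ x.2 ≤ n)
    (h : ℤ × ℤ → ℤ × ℤ → ℤ) (hh : ∀ x ∈ T, ZAIsHammock n x (h x))
    (horbits : ∀ x ∈ T, ∀ x' ∈ T, x ≠ x' → ∀ k : ℤ, (ZASigma n ^ k) x ≠ x')
    (hvanish : ∀ x ∈ T, ∀ x' ∈ T, x ≠ x' → h x x' = 0)
    (c : ℤ × ℤ → ℕ)
    (f : ℤ × ℤ → ℤ) (hf : ∀ y, f y = ∑ x ∈ T, (c x : ℤ) * h x y) :
    (∀ x ∈ T, f x = -(c x : ℤ)) ∧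
    (∀ y : ℤ × ℤ, 1 ≤ y.2 → y.2 ≤ n → (∀ x ∈ T, ∀ k : ℤ, (ZASigma n ^ k) x ≠ y) → 0 ≤ f y) ∧
    (∀ y : ℤ × ℤ, 1 ≤ y.2 → y.2 ≤ n → f y = ∑ x ∈ T, max (-f x) 0 * h x y) := by
  have e1 : ∀ x ∈ T, f x = -(c x : ℤ) := by
    intro x hx
    rw [hf, Finset.sum_eq_single_of_mem x hx]
    · rw [(hh x hx).2.1]; ring
    · intro b hb hne
      rw [hvanish b hb x hx hne, mul_zero]
  refine ⟨e1, ?_, ?_⟩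
  · intro y hy hy' hk
    rw [hf]
    refine Finset.sum_nonneg fun x hx => mul_nonneg (Int.natCast_nonneg _) ?_
    obtain ⟨p1, p2⟩ := hT x hx
    rw [za_unique n x p1 p2 _ _ (hh x hx) (zaGlob_hammock n hn x p1 p2) y hy hy']
    exact zaGlob_nonneg n hn x y (hk x hx)
  · intro y _ _
    rw [hf]
    refine Finset.sum_congr rfl fun x hx => ?_
    rw [e1 x hx, neg_neg, max_eq_left (Int.natCast_nonneg _)]
end

section
/- (Rectangle rule.) Let s, t ≥ 1 and let f : {0,…,s} × {0,…,t} → ℤ satisfy the mesh relations f(a,b) + f(a−1,b−1) = f(a−1,b)⁺ + f(a,b−1)⁺ for all 1 ≤ a ≤ s, 1 ≤ b ≤ t, and assume f(0,0) ≤ 0. Then f(s,t) = f(0,0)⁻ + Σ_{i=1}^{s−1} f(i,0)⁻ + f(s,0)⁺ + Σ_{j=1}^{t−1} f(0,j)⁻ + f(0,t)⁺. In particular f(s,t) ≥ f(0,0)⁻ ≥ 0. -/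
theorem aux_sum (g : ℤ → ℤ) (a : ℤ) (ha : 0 ≤ a) :
    (∑ i ∈ Finset.Icc 1 (a + 1), g i) = (∑ i ∈ Finset.Icc 1 a, g i) + g (a + 1) := by
  have h : Finset.Icc 1 (a + 1) = insert (a + 1) (Finset.Icc 1 a) := by
    ext x
    simp only [Finset.mem_Icc, Finset.mem_insert]
    omega
  rw [h, Finset.sum_insert (by simp), add_comm]

theorem aux_main (s t : ℤ) (f : ℤ × ℤ → ℤ) (S T : ℤ → ℤ)
    (hmesh : ∀ a b : ℤ, 1 ≤ a → a ≤ s → 1 ≤ b → b ≤ t →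
      f (a, b) + f (a - 1, b - 1) = max (f (a - 1, b)) 0 + max (f (a, b - 1)) 0)
    (hx : f (0, 0) ≤ 0)
    (hS0 : S 0 = 0) (hT0 : T 0 = 0) (hSn : ∀ a, 0 ≤ S a) (hTn : ∀ a, 0 ≤ T a)
    (hS : ∀ a, 0 ≤ a → S (a + 1) = S a + max (-f (a + 1, 0)) 0)
    (hT : ∀ a, 0 ≤ a → T (a + 1) = T a + max (-f (0, a + 1)) 0) (m : ℕ) :
    ∀ n : ℕ, (m : ℤ) + 1 ≤ s → (n : ℤ) + 1 ≤ t →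
      f ((m : ℤ) + 1, (n : ℤ) + 1) = -f (0, 0) + S m + max (f ((m : ℤ) + 1, 0)) 0
        + T n + max (f (0, (n : ℤ) + 1)) 0 := by
  induction m with
  | zero =>
    intro n
    induction n with
    | zero =>
      intro h1 h2
      have h := hmesh 1 1 (by omega) (by simpa using h1) (by omega) (by simpa using h2)
      simp [hS0, hT0] at h ⊢
      omega
    | succ n ih =>
      intro h1 h2
      push_cast at *
      have i1 := ih h1 (by omega)
      have h := hmesh 1 ((n : ℤ) + 1 + 1) (by omega) (by omega) (by omega) h2
      have h4 := hT n (by omega)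
      have h5 := hTn n
      simp only [add_sub_cancel_right, sub_self, zero_add, hS0, hT0] at *
      omega
  | succ m ihm =>
    intro n
    induction n with
    | zero =>
      intro h1 h2
      have i1 := ihm 0 (by push_cast at h1; omega) h2
      push_cast at *
      have h := hmesh ((m : ℤ) + 1 + 1) 1 (by omega) h1 (by omega) (by omega)
      have h4 := hS m (by omega)
      have h5 := hSn m
      simp only [add_sub_cancel_right, sub_self, zero_add, hS0, hT0] at *
      omega
    | succ n ih =>
      intro h1 h2
      have i1 := ihm n (by push_cast at h1; omega) (by push_cast at h2; omega)
      have i2 := ihm (n + 1) (by push_cast at h1; omega) h2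
      have i3 := ih h1 (by push_cast at h2; omega)
      push_cast at *
      have h := hmesh ((m : ℤ) + 1 + 1) ((n : ℤ) + 1 + 1) (by omega) h1 (by omega) h2
      have h4 := hS m (by omega)
      have h5 := hSn m
      have h6 := hT n (by omega)
      have h7 := hTn n
      simp only [add_sub_cancel_right, sub_self, zero_add, hS0, hT0] at *
      omega

theorem stmt_12 (s t : ℤ) (hs : 1 ≤ s) (ht : 1 ≤ t) (f : ℤ × ℤ → ℤ)
    (hmesh : ∀ a b : ℤ, 1 ≤ a → a ≤ s → 1 ≤ b → b ≤ t →
      f (a, b) + f (a - 1, b - 1) = max (f (a - 1, b)) 0 + max (f (a, b - 1)) 0)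
    (hx : f (0, 0) ≤ 0) :
    f (s, t) = max (-f (0, 0)) 0
      + (∑ i ∈ Finset.Icc 1 (s - 1), max (-f (i, 0)) 0) + max (f (s, 0)) 0
      + (∑ j ∈ Finset.Icc 1 (t - 1), max (-f (0, j)) 0) + max (f (0, t)) 0 ∧
    max (-f (0, 0)) 0 ≤ f (s, t) ∧ 0 ≤ max (-f (0, 0)) 0 := by
  have hSn : ∀ a : ℤ, 0 ≤ ∑ i ∈ Finset.Icc 1 a, max (-f (i, 0)) 0 :=
    fun a => Finset.sum_nonneg fun i _ => le_max_right _ _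
  have hTn : ∀ a : ℤ, 0 ≤ ∑ j ∈ Finset.Icc 1 a, max (-f (0, j)) 0 :=
    fun a => Finset.sum_nonneg fun i _ => le_max_right _ _
  have key := aux_main s t f (fun a => ∑ i ∈ Finset.Icc 1 a, max (-f (i, 0)) 0)
    (fun a => ∑ j ∈ Finset.Icc 1 a, max (-f (0, j)) 0) hmesh hx (by simp) (by simp) hSn hTn
    (fun a ha => aux_sum (fun i => max (-f (i, 0)) 0) a ha)
    (fun a ha => aux_sum (fun j => max (-f (0, j)) 0) a ha)
    (s - 1).toNat (t - 1).toNat (by omega) (by omega)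
  rw [Int.toNat_of_nonneg (by omega), Int.toNat_of_nonneg (by omega)] at key
  simp only [sub_add_cancel] at key
  have h1 := hSn (s - 1)
  have h2 := hTn (t - 1)
  refine ⟨?_, ?_, ?_⟩ <;> omega
end

section
/- (Extended rectangle rule.) Let s, t ≥ 1 and let f be an integer-valued function on ({0,…,s+1} × {0,…,t}) \ {(s+1,0)} satisfying: f(a,b) + f(a−1,b−1) = f(a−1,b)⁺ + f(a,b−1)⁺ for all 1 ≤ a ≤ s, 1 ≤ b ≤ t and for a = s+1, 2 ≤ b ≤ t; and f(s+1,1) + f(s,0) = f(s,1)⁺. Assume f(0,0) ≤ 0. Then f(s+1,t) = f(0,0)⁻ + Σ_{i=1}^{s} f(i,0)⁻ + Σ_{j=1}^{t−1} f(0,j)⁻ + f(0,t)⁺. -/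
lemma sum_Icc_cast (g : ℤ → ℤ) (n : ℕ) :
    ∑ i ∈ Finset.Icc (1 : ℤ) n, g i = ∑ i ∈ Finset.range n, g (i + 1) := by
  induction n with
  | zero => simp
  | succ n ih =>
    rw [Finset.sum_range_succ, ← ih]
    have h : Finset.Icc (1 : ℤ) ((n + 1 : ℕ) : ℤ) =
        insert ((n : ℤ) + 1) (Finset.Icc (1 : ℤ) n) := by
      ext x; simp only [Finset.mem_Icc, Finset.mem_insert]; push_cast; omega
    rw [h, Finset.sum_insert (by simp), add_comm]

lemma rect_rule (m n : ℕ) (F : ℕ → ℕ → ℤ) (h0 : F 0 0 ≤ 0)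
    (h : ∀ a b, a < m → b < n →
      F (a + 1) (b + 1) + F a b = max (F a (b + 1)) 0 + max (F (a + 1) b) 0) :
    ∀ a b, a < m → b < n → F (a + 1) (b + 1) = -F 0 0
      + (∑ i ∈ Finset.range a, max (-F (i + 1) 0) 0)
      + (∑ j ∈ Finset.range b, max (-F 0 (j + 1)) 0)
      + max (F (a + 1) 0) 0 + max (F 0 (b + 1)) 0 := by
  have hA : ∀ a, 0 ≤ ∑ i ∈ Finset.range a, max (-F (i + 1) 0) 0 :=
    fun a => Finset.sum_nonneg fun _ _ => le_max_right _ _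
  have hB : ∀ b, 0 ≤ ∑ j ∈ Finset.range b, max (-F 0 (j + 1)) 0 :=
    fun b => Finset.sum_nonneg fun _ _ => le_max_right _ _
  intro a
  induction a with
  | zero =>
    intro b
    induction b with
    | zero =>
      intro ha hb
      have := h 0 0 ha hb
      simp only [Finset.range_zero, Finset.sum_empty, zero_add] at *
      omega
    | succ b ih =>
      intro ha hb
      have h1 := h 0 (b + 1) ha hb
      have h2 := ih ha (by omega)
      have h3 := hB b
      rw [Finset.sum_range_succ]
      simp only [Finset.range_zero, Finset.sum_empty, zero_add] at *
      omega
  | succ a iha =>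
    intro b
    induction b with
    | zero =>
      intro ha hb
      have h1 := h (a + 1) 0 ha hb
      have h2 := iha 0 (by omega) hb
      have h3 := hA a
      rw [Finset.sum_range_succ]
      simp only [Finset.range_zero, Finset.sum_empty, zero_add] at *
      omega
    | succ b ih =>
      intro ha hb
      have h1 := h (a + 1) (b + 1) ha hb
      have h2 := ih ha (by omega)
      have h4 := iha b (by omega) (by omega)
      have h5 := iha (b + 1) (by omega) hb
      have h3 := hA a
      have h6 := hB b
      rw [Finset.sum_range_succ] at h2 h5 ⊢
      rw [Finset.sum_range_succ (fun j => max (-F 0 (j + 1)) 0)]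
      omega

theorem stmt_13 (s t : ℤ) (hs : 1 ≤ s) (ht : 1 ≤ t) (f : ℤ × ℤ → ℤ)
    (hmesh : ∀ a b : ℤ, 1 ≤ a → a ≤ s → 1 ≤ b → b ≤ t →
      f (a, b) + f (a - 1, b - 1) = max (f (a - 1, b)) 0 + max (f (a, b - 1)) 0)
    (hmesh' : ∀ b : ℤ, 2 ≤ b → b ≤ t →
      f (s + 1, b) + f (s, b - 1) = max (f (s, b)) 0 + max (f (s + 1, b - 1)) 0)
    (hmesh'' : f (s + 1, 1) + f (s, 0) = max (f (s, 1)) 0)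
    (hx : f (0, 0) ≤ 0) :
    f (s + 1, t) = max (-f (0, 0)) 0
      + (∑ i ∈ Finset.Icc 1 s, max (-f (i, 0)) 0)
      + (∑ j ∈ Finset.Icc 1 (t - 1), max (-f (0, j)) 0) + max (f (0, t)) 0 := by
  obtain ⟨m, rfl⟩ := Int.eq_ofNat_of_zero_le (by omega : 0 ≤ s)
  obtain ⟨n, hn⟩ := Int.eq_ofNat_of_zero_le (by omega : 0 ≤ t - 1)
  obtain rfl : t = n + 1 := by omega
  have key := rect_rule (m + 1) (n + 1)
    (fun a b => if a = m + 1 ∧ b = 0 then 0 else f (a, b)) (by simpa using hx)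
    (by
      intro a b ha hb
      have e1 : ¬ (a = m + 1 ∧ b = 0) := by omega
      rcases Nat.lt_or_ge a m with h | h
      · have := hmesh (a + 1) (b + 1) (by omega) (by omega) (by omega) (by omega)
        have e2 : ¬ (a = m) := by omega
        simpa [e1, e2] using this
      · obtain rfl : a = m := by omega
        rcases Nat.eq_zero_or_pos b with rfl | h
        · simpa using hmesh''
        · have := hmesh' (b + 1) (by omega) (by omega)
          have e2 : b ≠ 0 := by omega
          simpa [e2] using this)
    m n (by omega) (by omega)
  have hsum : ∑ i ∈ Finset.range m,
      max (-(if i + 1 = m + 1 ∧ 0 = 0 then 0 else f (((i + 1 : ℕ) : ℤ), ((0 : ℕ) : ℤ)))) 0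
      = ∑ i ∈ Finset.range m, max (-f ((i : ℤ) + 1, 0)) 0 := by
    apply Finset.sum_congr rfl
    intro i hi
    have : i ≠ m := by have := Finset.mem_range.1 hi; omega
    simp [this]
  rw [hsum] at key
  rw [show (n : ℤ) + 1 - 1 = n by ring, sum_Icc_cast (fun i => max (-f (i, 0)) 0),
    sum_Icc_cast (fun j => max (-f (0, j)) 0), max_eq_left (by omega : 0 ≤ -f (0, 0))]
  simpa using key
end

section
/- (Double extended rectangle rule.) Let s, t ≥ 1 and let f be an integer-valued function on ({0,…,s+1} × {0,…,t+1}) \ {(s+1,0), (0,t+1)} satisfying: f(a,b) + f(a−1,b−1) = f(a−1,b)⁺ + f(a,b−1)⁺ for all 1 ≤ a ≤ s, 1 ≤ b ≤ t, for a = s+1 with 2 ≤ b ≤ t+1, and for b = t+1 with 2 ≤ a ≤ s; together with f(s+1,1) + f(s,0) = f(s,1)⁺ and f(1,t+1) + f(0,t) = f(1,t)⁺. Assume f(0,0) ≤ 0. Then f(s+1,t+1) = f(0,0)⁻ + Σ_{i=1}^{s} f(i,0)⁻ + Σ_{j=1}^{t} f(0,j)⁻. -/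
theorem aux_rect (m n : ℕ) (g : ℕ → ℕ → ℤ) (h0 : g 0 0 ≤ 0)
    (hg : ∀ a b : ℕ, a < m → b < n →
      g (a + 1) (b + 1) + g a b = max (g a (b + 1)) 0 + max (g (a + 1) b) 0) :
    ∀ a b : ℕ, a < m → b < n →
      g (a + 1) (b + 1) = - g 0 0
        + (∑ k ∈ Finset.range a, max (- g (k + 1) 0) 0 + max (g (a + 1) 0) 0)
        + (∑ k ∈ Finset.range b, max (- g 0 (k + 1)) 0 + max (g 0 (b + 1)) 0) := by
  have nA : ∀ a : ℕ, 0 ≤ ∑ k ∈ Finset.range a, max (- g (k + 1) 0) 0 :=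
    fun a => Finset.sum_nonneg (fun _ _ => le_max_right _ _)
  have nB : ∀ a : ℕ, 0 ≤ ∑ k ∈ Finset.range a, max (- g 0 (k + 1)) 0 :=
    fun a => Finset.sum_nonneg (fun _ _ => le_max_right _ _)
  intro a
  induction a with
  | zero =>
    intro b
    induction b with
    | zero =>
      intro ha hb
      have := hg 0 0 ha hb
      simp only [Finset.range_zero, Finset.sum_empty, zero_add] at *
      omega
    | succ b ih =>
      intro ha hb
      have h1 := hg 0 (b + 1) ha hb
      have h2 := ih ha (by omega)
      have h3 := nB b
      rw [Finset.sum_range_succ]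
      simp only [Finset.range_zero, Finset.sum_empty, zero_add] at *
      omega
  | succ a iha =>
    intro b
    induction b with
    | zero =>
      intro ha hb
      have h1 := hg (a + 1) 0 ha hb
      have h2 := iha 0 (by omega) hb
      have h3 := nA a
      rw [Finset.sum_range_succ]
      simp only [Finset.range_zero, Finset.sum_empty, zero_add] at *
      omega
    | succ b ih =>
      intro ha hb
      have h1 := hg (a + 1) (b + 1) ha hb
      have h2 := ih ha (by omega)
      have h3 := iha (b + 1) (by omega) hb
      have h4 := iha b (by omega) (by omega)
      have h5 := nA a
      have h6 := nB b
      have h7 := nA (a + 1)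
      have h8 := nB (b + 1)
      rw [Finset.sum_range_succ] at *
      rw [Finset.sum_range_succ (fun k => max (- g 0 (k + 1)) 0)] at *
      omega

theorem aux_sum_s14 (F : ℤ → ℤ) (m : ℕ) :
    ∑ i ∈ Finset.Icc 1 (m : ℤ), F i = ∑ k ∈ Finset.range m, F ((k : ℤ) + 1) := by
  induction m with
  | zero => simp
  | succ m ih =>
    rw [Finset.sum_range_succ, ← ih]
    have : Finset.Icc 1 ((m + 1 : ℕ) : ℤ) = insert ((m : ℤ) + 1) (Finset.Icc 1 (m : ℤ)) := by
      ext x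
      simp only [Finset.mem_Icc, Finset.mem_insert]
      omega
    rw [this, Finset.sum_insert (by simp), add_comm]

theorem stmt_14 (s t : ℤ) (hs : 1 ≤ s) (ht : 1 ≤ t) (f : ℤ × ℤ → ℤ)
    (hmesh : ∀ a b : ℤ, 1 ≤ a → a ≤ s → 1 ≤ b → b ≤ t →
      f (a, b) + f (a - 1, b - 1) = max (f (a - 1, b)) 0 + max (f (a, b - 1)) 0)
    (hmeshR : ∀ b : ℤ, 2 ≤ b → b ≤ t + 1 →
      f (s + 1, b) + f (s, b - 1) = max (f (s, b)) 0 + max (f (s + 1, b - 1)) 0)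
    (hmeshT : ∀ a : ℤ, 2 ≤ a → a ≤ s →
      f (a, t + 1) + f (a - 1, t) = max (f (a - 1, t + 1)) 0 + max (f (a, t)) 0)
    (hcornR : f (s + 1, 1) + f (s, 0) = max (f (s, 1)) 0)
    (hcornT : f (1, t + 1) + f (0, t) = max (f (1, t)) 0)
    (hx : f (0, 0) ≤ 0) :
    f (s + 1, t + 1) = max (-f (0, 0)) 0
      + (∑ i ∈ Finset.Icc 1 s, max (-f (i, 0)) 0)
      + (∑ j ∈ Finset.Icc 1 t, max (-f (0, j)) 0) := by
  obtain ⟨m, rfl⟩ := Int.eq_ofNat_of_zero_le (by omega : 0 ≤ s)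
  obtain ⟨n, rfl⟩ := Int.eq_ofNat_of_zero_le (by omega : 0 ≤ t)
  rw [aux_sum_s14 (fun i => max (-f (i, 0)) 0), aux_sum_s14 (fun i => max (-f (0, i)) 0)]
  let g : ℕ → ℕ → ℤ := fun a b =>
    if (a = m + 1 ∧ b = 0) ∨ (a = 0 ∧ b = n + 1) then 0 else f (a, b)
  have g1 : ∀ a b : ℕ, ¬ ((a = m + 1 ∧ b = 0) ∨ (a = 0 ∧ b = n + 1)) → g a b = f (a, b) :=
    fun a b h => if_neg h
  have g2 : g (m + 1) 0 = 0 := if_pos (by simp)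
  have g3 : g 0 (n + 1) = 0 := if_pos (by simp)
  have key := aux_rect (m + 1) (n + 1) g (by rw [g1 0 0 (by omega)]; exact_mod_cast hx) (by
    intro a b ha hb
    rw [g1 (a + 1) (b + 1) (by omega), g1 a b (by omega)]
    by_cases hA : a = m
    · subst hA
      rw [g1 a (b + 1) (by omega)]
      by_cases hB : b = 0
      · subst hB
        rw [g2]
        push_cast
        simpa using hcornR
      · rw [g1 (a + 1) b (by omega)]
        have := hmeshR (b + 1) (by omega) (by omega)
        simpa using this
    · rw [g1 (a + 1) b (by omega)]
      by_cases hB : b = n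
      · subst hB
        by_cases hA0 : a = 0
        · subst hA0
          rw [g3]
          push_cast
          simpa using hcornT
        · rw [g1 a (b + 1) (by omega)]
          have := hmeshT (a + 1) (by omega) (by omega)
          simpa using this
      · rw [g1 a (b + 1) (by omega)]
        have := hmesh (a + 1) (b + 1) (by omega) (by omega) (by omega) (by omega)
        simpa using this) m n (by omega) (by omega)
  rw [g2, g3, g1 _ _ (by omega), g1 0 0 (by omega)] at key
  have e1 : ∑ k ∈ Finset.range m, max (- g (k + 1) 0) 0
      = ∑ k ∈ Finset.range m, max (-f ((k : ℤ) + 1, 0)) 0 := by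
    refine Finset.sum_congr rfl fun k hk => ?_
    have := Finset.mem_range.1 hk
    rw [g1 _ _ (by omega)]
    push_cast
    rfl
  have e2 : ∑ k ∈ Finset.range n, max (- g 0 (k + 1)) 0
      = ∑ k ∈ Finset.range n, max (-f (0, (k : ℤ) + 1)) 0 := by
    refine Finset.sum_congr rfl fun k hk => ?_
    have := Finset.mem_range.1 hk
    rw [g1 _ _ (by omega)]
    push_cast
    rfl
  rw [e1, e2] at key
  push_cast at key
  rw [key, max_eq_left (by omega : 0 ≤ -f (0, 0))]
  simp
end

section
/- (Wing lemma.) Let s ≥ 0, t ≥ 1 and m = s+t+1. Let W = {(i,j) ∈ ℤ × ℤ : 1 ≤ i ≤ j ≤ m} and let f : W → ℤ satisfy, for all 2 ≤ i ≤ j ≤ m, the mesh relation f(i,j) + f(i−1,j−1) = f(i−1,j)⁺ + (f(i,j−1)⁺ if i ≤ j−1, else 0). Assume: f(1,s) ≤ 0 in case s ≥ 1; f(1,s+k) ≥ 0 for all 1 ≤ k ≤ t; and f(1,m) ≤ 0. Then f(s+2, m) = −min{ f(1,s+k) : 1 ≤ k ≤ t }, and moreover f(i,j) ≥ 0 for all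 (i,j) with 1 ≤ i ≤ s+1, s+1 ≤ j ≤ m and (i,j) ≠ (1,m). -/
theorem stmt_15 (s t : ℤ) (hs : 0 ≤ s) (ht : 1 ≤ t) (m : ℤ) (hm : m = s + t + 1)
    (f : ℤ × ℤ → ℤ)
    (hmesh : ∀ i j : ℤ, 2 ≤ i → i ≤ j → j ≤ m →
      f (i, j) + f (i - 1, j - 1) =
        max (f (i - 1, j)) 0 + (if i ≤ j - 1 then max (f (i, j - 1)) 0 else 0))
    (h1 : 1 ≤ s → f (1, s) ≤ 0)
    (h2 : ∀ k : ℤ, 1 ≤ k → k ≤ t → 0 ≤ f (1, s + k))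
    (h3 : f (1, m) ≤ 0) :
    f (s + 2, m) =
      -((Finset.Icc (1 : ℤ) t).inf' (Finset.nonempty_Icc.mpr ht) (fun k => f (1, s + k))) ∧
    ∀ i j : ℤ, 1 ≤ i → i ≤ s + 1 → s + 1 ≤ j → j ≤ m → (i, j) ≠ (1, m) → 0 ≤ f (i, j) := by
  subst hm
  have L1 : ∀ i : ℤ, 1 ≤ i → i ≤ s + 1 →
      f (1, s+1) + (if i ≤ s then max (f (i, s)) 0 else 0) ≤ f (i, s+1) := by
    intro i hi
    induction i, hi using Int.leInduction with
    | base =>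
      intro _
      split_ifs with h
      · have := h1 h
        rw [max_eq_right this]; simp
      · simp
    | succ n hn ih =>
      intro hn2
      have ih := ih (by omega)
      have e := hmesh (n+1) (s+1) (by omega) (by omega) (by omega)
      have a1 := h2 1 le_rfl ht
      simp only [add_sub_cancel_right] at e
      rw [if_pos (by omega)] at ih
      split_ifs at e ⊢ <;> omega
  have a1 := h2 1 le_rfl ht
  have G : ∀ i : ℤ, 1 ≤ i → i ≤ s + 1 → f (1, s+1) ≤ f (i, s+1) := by
    intro i hi hi2
    have := L1 i hi hi2
    split_ifs at this <;> omega
  have L2 : ∀ k : ℤ, 1 ≤ k → k ≤ t → ∀ i : ℤ, 1 ≤ i → i ≤ s + 1 →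
      f (i, s+k) = f (1, s+k) + f (i, s+1) - f (1, s+1) := by
    intro k hk
    induction k, hk using Int.leInduction with
    | base => intros; omega
    | succ k hk ihk =>
      intro hkt i hi
      have ihk := ihk (by omega)
      have p0 := h2 k hk (by omega)
      have p1 := h2 (k+1) (by omega) hkt
      induction i, hi using Int.leInduction with
      | base => intros; omega
      | succ n hn ih =>
        intro hn2
        have ih := ih (by omega)
        have e := hmesh (n+1) (s+(k+1)) (by omega) (by omega) (by omega)
        rw [if_pos (by omega)] at e
        rw [show s + (k+1) - 1 = s + k by ring, add_sub_cancel_right] at e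
        have := ihk n hn (by omega)
        have := ihk (n+1) (by omega) (by omega)
        have := G n hn (by omega)
        have := G (n+1) (by omega) (by omega)
        omega
  have pt := h2 t ht le_rfl
  have S3 : ∀ i : ℤ, 1 ≤ i → i + 1 ≤ s + 1 →
      f (i+1, s+t+1) = max (f (i, s+t+1)) 0 + f (i+1, s+1) - f (i, s+1) := by
    intro n hn hn2
    have e := hmesh (n+1) (s+t+1) (by omega) (by omega) (by omega)
    rw [if_pos (by omega)] at e
    rw [add_sub_cancel_right, add_sub_cancel_right] at e
    have := L2 t ht le_rfl n hn (by omega)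
    have := L2 t ht le_rfl (n+1) (by omega) (by omega)
    have := G (n+1) (by omega) (by omega)
    omega
  have L3 : ∀ i : ℤ, 1 ≤ i → i ≤ s + 1 →
      max (f (i, s+t+1)) 0 = f (i, s+1) - f (1, s+1) := by
    intro i hi
    induction i, hi using Int.leInduction with
    | base => intros; omega
    | succ n hn ih =>
      intro hn2
      have ih := ih (by omega)
      have := S3 n hn hn2
      have := G (n+1) (by omega) (by omega)
      omega
  have L4 : ∀ k : ℤ, 1 ≤ k → k ≤ t →
      (∀ l : ℤ, 1 ≤ l → l ≤ k →
        f (1, s+k) - (if s + 2 ≤ s + k then max (f (s+2, s+k)) 0 else 0) ≤ f (1, s+l)) ∧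
      ∃ l : ℤ, 1 ≤ l ∧ l ≤ k ∧
        f (1, s+k) - (if s + 2 ≤ s + k then max (f (s+2, s+k)) 0 else 0) = f (1, s+l) := by
    intro k hk
    induction k, hk using Int.leInduction with
    | base =>
      intro _
      rw [if_neg (by omega)]
      refine ⟨fun l h h' => ?_, 1, le_rfl, le_rfl, by omega⟩
      obtain rfl : l = 1 := by omega
      omega
    | succ k hk ih =>
      intro hkt
      obtain ⟨A, l0, hl0, hl1, B⟩ := ih (by omega)
      have e := hmesh (s+2) (s+(k+1)) (by omega) (by omega) (by omega)
      rw [show s + (k+1) - 1 = s + k by ring, show s + 2 - 1 = s + 1 by ring] at e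
      have q0 := L2 k hk (by omega) (s+1) (by omega) le_rfl
      have q1 := L2 (k+1) (by omega) hkt (s+1) (by omega) le_rfl
      have p1 := h2 (k+1) (by omega) hkt
      have g := G (s+1) (by omega) le_rfl
      rw [if_pos (show s + 2 ≤ s + (k+1) by omega)]
      generalize (if s + 2 ≤ s + k then max (f (s+2, s+k)) 0 else 0) = b at *
      refine ⟨fun l h h' => ?_, ?_⟩
      · rcases eq_or_lt_of_le h' with rfl | h''
        · omega
        · have := A l h (by omega)
          omega
      · by_cases c : 0 ≤ f (s+2, s+(k+1))
        · exact ⟨l0, hl0, by omega, by omega⟩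
        · exact ⟨k+1, by omega, le_rfl, by omega⟩
  refine ⟨?_, ?_⟩
  · obtain ⟨A, l0, hl0, hl1, B⟩ := L4 t ht le_rfl
    have e := hmesh (s+2) (s+t+1) (by omega) (by omega) (by omega)
    rw [add_sub_cancel_right, show s + 2 - 1 = s + 1 by ring] at e
    have q0 := L2 t ht le_rfl (s+1) (by omega) le_rfl
    have q1 := L3 (s+1) (by omega) le_rfl
    have : (Finset.Icc (1 : ℤ) t).inf' (Finset.nonempty_Icc.mpr ht) (fun k => f (1, s + k))
        = f (1, s+l0) := by
      apply le_antisymm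
      · exact Finset.inf'_le (fun k => f (1, s + k)) (Finset.mem_Icc.mpr ⟨hl0, hl1⟩)
      · apply Finset.le_inf'
        intro l hl
        rw [Finset.mem_Icc] at hl
        rw [← B]
        exact A l hl.1 hl.2
    rw [this]
    generalize (if s + 2 ≤ s + t then max (f (s+2, s+t)) 0 else 0) = b at *
    omega
  · intro i j hi hi2 hj hj2 hne
    by_cases hjm : j = s + t + 1
    · subst hjm
      have : i ≠ 1 := by rintro rfl; exact hne rfl
      have a := S3 (i-1) (by omega) (by omega)
      have b := L3 (i-1) (by omega) (by omega)
      rw [sub_add_cancel] at a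
      have := G i hi hi2
      omega
    · have a := L2 (j-s) (by omega) (by omega) i hi hi2
      have b := h2 (j-s) (by omega) (by omega)
      rw [add_sub_cancel] at a b
      have := G i hi hi2
      omega
end

section
/- Let n ≥ 2 and let f be a cluster-additive function on ℤA_n. If z = (i,p) is a vertex with f(z) ≤ 0, then there exists a vertex z' ≠ z with f(z') ≤ 0 which lies on a common sectional path with z, i.e. z' ∈ {(i,q) : 1 ≤ q ≤ n} ∪ {(i+p−q, q) : 1 ≤ q ≤ n}. -/
theorem stmt_16 (n : ℤ) (hn : 2 ≤ n) (f : ℤ × ℤ → ℤ)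
    (hca : ZAClusterAdditive n f)
    (i p : ℤ) (hp1 : 1 ≤ p) (hpn : p ≤ n) (hz : f (i, p) ≤ 0) :
    ∃ z' : ℤ × ℤ, z' ≠ (i, p) ∧ 1 ≤ z'.2 ∧ z'.2 ≤ n ∧ f z' ≤ 0 ∧
      ((∃ q : ℤ, 1 ≤ q ∧ q ≤ n ∧ z' = (i, q)) ∨
       (∃ q : ℤ, 1 ≤ q ∧ q ≤ n ∧ z' = (i + p - q, q))) := by
  by_contra hcon
  have hR : ∀ q, 1 ≤ q → q ≤ n → q ≠ p → 0 < f (i, q) := by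
    intro q h1 h2 h3
    by_contra h
    exact hcon ⟨(i, q), by simp [h3], h1, h2, not_lt.mp h, Or.inl ⟨q, h1, h2, rfl⟩⟩
  have hL : ∀ q, 1 ≤ q → q ≤ n → q ≠ p → 0 < f (i + p - q, q) := by
    intro q h1 h2 h3
    by_contra h
    exact hcon ⟨(i + p - q, q), by simp [h3], h1, h2, not_lt.mp h, Or.inr ⟨q, h1, h2, rfl⟩⟩
  rcases lt_or_eq_of_le hpn with hlt | heq
  · -- use the part of the diagonals above `z`
    have hb := hL (p + 1) (by omega) (by omega) (by omega)
    rw [show i + p - (p + 1) = i - 1 by ring] at hb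
    have key : ∀ q, p ≤ q → q ≤ n - 1 →
        f (i - 1, q + 1) = f (i - 1, p + 1) + max (f (i, q)) 0 := by
      intro q hq
      induction q, hq using Int.le_induction with
      | base => intro _; omega
      | succ q hq ih =>
        intro hq2
        have ih := ih (by omega)
        have m := hca i (q + 1) (by omega) (by omega)
        rw [if_pos (by omega), if_pos (by omega), show q + 1 - 1 = q by ring] at m
        have := hR (q + 1) (by omega) (by omega) (by omega)
        omega
    have k := key (n - 1) (by omega) le_rfl
    have m := hca i n (by omega) le_rfl
    rw [if_pos (by omega), if_neg (by omega)] at m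
    rw [show n - 1 + 1 = n by ring] at k
    have := hR n (by omega) le_rfl (by omega)
    omega
  · -- `p = n`: use the part of the diagonals below `z`
    have hb := hL (p - 1) (by omega) (by omega) (by omega)
    rw [show i + p - (p - 1) = i + 1 by ring] at hb
    have key : ∀ q, q ≤ p → 2 ≤ q →
        f (i + 1, q - 1) = f (i + 1, p - 1) + max (f (i, q)) 0 := by
      intro q hq
      induction q, hq using Int.le_induction_down with
      | base => intro _; omega
      | pred q hq ih =>
        intro hq2
        have ih := ih (by omega)
        have m := hca (i + 1) (q - 1) (by omega) (by omega)
        rw [if_pos (by omega), if_pos (by omega), show q - 1 + 1 = q by ring,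
          show i + 1 - 1 = i by ring] at m
        have := hR (q - 1) (by omega) (by omega) (by omega)
        omega
    have k := key 2 (by omega) le_rfl
    have m := hca (i + 1) 1 (by omega) (by omega)
    rw [if_neg (by omega), if_pos (by omega), show i + 1 - 1 = i by ring] at m
    norm_num at k m
    have := hR 1 (by omega) (by omega) (by omega)
    omega
end
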